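/- Let n ≥ 3 be an integer. There is a constant C, depending only on n, with the following property: for every complex Hilbert space H, bounded self-adjoint operators A₁, A₂ on H, bounded self-adjoint operators P₁, P₂ on H with ‖P₁‖ ≤ 1 and ‖P₂‖ ≤ 1, and a bounded operator J on H satisfying [P₁, J] = [P₂, J] = 0 and (P₁ − P₂) J = 0, and for every compactly supported f ∈ Cⁿ(ℝ), one has ‖𝒟(A₁,P₁;f) J − J 𝒟(A₂,P₂;f)‖ ≤ C · N_n(f) · (‖(A₁−A₂) J‖ + ‖[A₂, J]‖) and ‖J 𝒟(A₁,P₁;f) − J 𝒟(A₂,P₂;f)‖ ≤ C · N_n(f) · (‖(A₁−A₂) J‖ + ‖[A₁, J]‖ + ‖[A₂, J]‖), where all norms are operator norms. -/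

import Mathlib

open scoped BigOperators

/-- `N_n(f) = ∫ F(x) ⟨x⟩^{n−2} dx` with `F(x) = Σ_{l=0}^n |f^{(l)}(x)| ⟨x⟩^{−n+l}`,
`⟨x⟩ = √(1+x²)`. -/
noncomputable def Nseminorm (n : ℕ) (f : ℝ → ℝ) : ℝ :=
  ∫ x : ℝ,
    (∑ l ∈ Finset.range (n + 1),
      |iteratedDeriv l f x| * Real.sqrt (1 + x ^ 2) ^ ((l : ℤ) - (n : ℤ))) *
    Real.sqrt (1 + x ^ 2) ^ ((n : ℤ) - 2)

/-- `𝒟(A, P; f) = P f(PAP) P − P f(A) P`, with `f(·)` the continuous functional calculus. -/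
noncomputable def Dop {H : Type*} [NormedAddCommGroup H] [InnerProductSpace ℂ H]
    [CompleteSpace H] (A P : H →L[ℂ] H) (f : ℝ → ℝ) : H →L[ℂ] H :=
  P * cfc f (P * A * P) * P - P * cfc f A * P

section
open scoped FourierTransform
open MeasureTheory
variable {H : Type*} [NormedAddCommGroup H] [InnerProductSpace ℂ H] [CompleteSpace H]

lemma qc_exp_eq (A : H →L[ℂ] H) (hA : IsSelfAdjoint A) (t : ℝ) :
    cfc (fun z : ℂ => Complex.exp ((t * z.re : ℝ) * Complex.I)) A
      = NormedSpace.exp (t • (Complex.I • A)) := by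
  have hn : IsStarNormal A := hA.isStarNormal
  have h1 : t • (Complex.I • A) = ((t : ℂ) * Complex.I) • A := by
    rw [mul_smul]; rfl
  have hn2 : IsStarNormal (((t : ℂ) * Complex.I) • A) := by infer_instance
  rw [h1, ← CFC.complex_exp_eq_normedSpace_exp (a := ((t : ℂ) * Complex.I) • A) hn2,
    ← cfc_comp_smul ((t : ℂ) * Complex.I) Complex.exp A (by fun_prop)]
  refine cfc_congr fun x hx => ?_
  have := SpectrumRestricts.real_iff.mp hA.spectrumRestricts x hx
  simp only [smul_eq_mul]
  conv_rhs => rw [this]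
  push_cast
  ring_nf

lemma qc_exp_norm (A : H →L[ℂ] H) (hA : IsSelfAdjoint A) (t : ℝ) :
    ‖NormedSpace.exp (t • (Complex.I • A))‖ ≤ 1 := by
  rw [← qc_exp_eq A hA]
  refine norm_cfc_le zero_le_one fun x _ => ?_
  rw [Complex.norm_exp_ofReal_mul_I]

lemma qc_exp_bound (A B J : H →L[ℂ] H) (hA : IsSelfAdjoint A) (hB : IsSelfAdjoint B) (t : ℝ) :
    ‖NormedSpace.exp (t • (Complex.I • A)) * J - J * NormedSpace.exp (t • (Complex.I • B))‖
      ≤ |t| * ‖A * J - J * B‖ := by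
  set X := Complex.I • A with hX
  set Y := Complex.I • B with hY
  have hd : ∀ s : ℝ, HasDerivAt (fun s : ℝ => NormedSpace.exp (s • X) * J *
      NormedSpace.exp (s • (-Y)))
      (NormedSpace.exp (s • X) * (X * J - J * Y) * NormedSpace.exp (s • (-Y))) s := by
    intro s
    have h1 := hasDerivAt_exp_smul_const (𝕂 := ℝ) X s
    have h2 := hasDerivAt_exp_smul_const' (𝕂 := ℝ) (-Y) s
    have h3 := (h1.mul_const J).mul h2
    refine h3.congr_deriv ?_
    noncomm_ring
  have hYn : ∀ s : ℝ, ‖NormedSpace.exp (s • (-Y))‖ ≤ 1 := by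
    intro s
    have := qc_exp_norm B hB (-s)
    rwa [neg_smul, ← smul_neg] at this
  have hXY : ‖X * J - J * Y‖ = ‖A * J - J * B‖ := by
    have : X * J - J * Y = Complex.I • (A * J - J * B) := by
      rw [hX, hY, smul_mul_assoc, mul_smul_comm, smul_sub]
    rw [this, norm_smul]; simp
  have hb : ∀ s : ℝ, ‖NormedSpace.exp (s • X) * (X * J - J * Y) * NormedSpace.exp (s • (-Y))‖
      ≤ ‖A * J - J * B‖ := by
    intro s
    calc _ ≤ ‖NormedSpace.exp (s • X)‖ * ‖X * J - J * Y‖ * ‖NormedSpace.exp (s • (-Y))‖ :=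
          (norm_mul_le _ _).trans (mul_le_mul_of_nonneg_right (norm_mul_le _ _) (norm_nonneg _))
      _ ≤ 1 * ‖X * J - J * Y‖ * 1 := by
          gcongr
          · exact qc_exp_norm A hA s
          · exact hYn s
      _ = _ := by rw [hXY]; ring
  have hmv := Convex.norm_image_sub_le_of_norm_hasDerivWithin_le
    (f := fun s : ℝ => NormedSpace.exp (s • X) * J * NormedSpace.exp (s • (-Y)))
    (s := Set.univ) (x := 0) (y := t) (fun s _ => (hd s).hasDerivWithinAt)
    (fun s _ => hb s) convex_univ (Set.mem_univ _) (Set.mem_univ _)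
  simp only [zero_smul, NormedSpace.exp_zero, one_mul, mul_one, sub_zero, Real.norm_eq_abs] at hmv
  have hinv : NormedSpace.exp (t • (-Y)) * NormedSpace.exp (t • Y) = 1 := by
    let : NormedAlgebra ℚ (H →L[ℂ] H) := NormedAlgebra.restrictScalars ℚ ℝ _
    rw [smul_neg, ← NormedSpace.exp_add_of_commute (Commute.neg_left (Commute.refl _))]
    simp
  have e : NormedSpace.exp (t • X) * J - J * NormedSpace.exp (t • Y)
      = (NormedSpace.exp (t • X) * J * NormedSpace.exp (t • (-Y)) - J) * NormedSpace.exp (t • Y) := by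
    rw [sub_mul, mul_assoc (_ * J), hinv, mul_one]
  rw [e]
  calc _ ≤ _ := norm_mul_le _ _
    _ ≤ (‖A * J - J * B‖ * |t|) * 1 := by
        gcongr
        exact qc_exp_norm B hB t
    _ = _ := by ring

/-- Fourier representation bound. -/
lemma qc_fourier (A B J : H →L[ℂ] H) (hA : IsSelfAdjoint A) (hB : IsSelfAdjoint B)
    (h : ℝ → ℝ) (φ : ℝ → ℂ) (hφ : Continuous φ) (hφi : Integrable φ)
    (hrep : ∀ x : ℝ, (h x : ℂ) = ∫ t : ℝ, φ t * Complex.exp ((2 * Real.pi * t * x : ℝ) * Complex.I))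
    (b : ℝ → ℝ) (hb : Integrable b) (hbb : ∀ t, ‖φ t‖ * (2 * Real.pi * |t|) ≤ b t) :
    ‖cfc h A * J - J * cfc h B‖ ≤ (∫ t, b t) * ‖A * J - J * B‖ := by
  have key : ∀ A : H →L[ℂ] H, IsSelfAdjoint A →
      Integrable (fun t => φ t • NormedSpace.exp ((2 * Real.pi * t) • (Complex.I • A))) ∧
      cfc h A = ∫ t, φ t • NormedSpace.exp ((2 * Real.pi * t) • (Complex.I • A)) := by
    intro A hA
    have hn : IsStarNormal A := hA.isStarNormal
    have e : ∀ t : ℝ, φ t • NormedSpace.exp ((2 * Real.pi * t) • (Complex.I • A))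
       = cfc (fun z : ℂ => φ t * Complex.exp ((2 * Real.pi * t * z.re : ℝ) * Complex.I)) A := by
      intro t
      rw [← qc_exp_eq A hA, ← cfc_smul _ _ _ (by fun_prop)]
      simp only [smul_eq_mul]
    simp_rw [e]
    have hc : ContinuousOn (Function.uncurry fun (t : ℝ) (z : ℂ) =>
        φ t * Complex.exp ((2 * Real.pi * t * z.re : ℝ) * Complex.I))
        (Set.univ ×ˢ spectrum ℂ A) := by
      apply Continuous.continuousOn
      unfold Function.uncurry
      fun_prop
    have hbd : ∀ᵐ t : ℝ, ∀ z ∈ spectrum ℂ A,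
        ‖φ t * Complex.exp ((2 * Real.pi * t * z.re : ℝ) * Complex.I)‖ ≤ ‖φ t‖ := by
      refine .of_forall fun t z _ => ?_
      rw [norm_mul, Complex.norm_exp_ofReal_mul_I, mul_one]
    constructor
    · exact integrable_cfc _ (fun t => ‖φ t‖) A hc hbd hφi.norm.2
    · rw [cfc_real_eq_complex, ← cfc_integral _ (fun t => ‖φ t‖) A hc hbd hφi.norm.2]
      congr 1
      ext z
      rw [hrep]
  obtain ⟨iA, eA⟩ := key A hA
  obtain ⟨iB, eB⟩ := key B hB
  have e : cfc h A * J - J * cfc h B = ∫ t, φ t •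
      (NormedSpace.exp ((2 * Real.pi * t) • (Complex.I • A)) * J
        - J * NormedSpace.exp ((2 * Real.pi * t) • (Complex.I • B))) := by
    rw [eA, eB, ← integral_mul_const_of_integrable iA, ← integral_const_mul_of_integrable iB,
      ← integral_sub (iA.mul_const _) (iB.const_mul _)]
    simp only [smul_sub, smul_mul_assoc, mul_smul_comm]
  rw [e, ← integral_mul_const]
  refine norm_integral_le_of_norm_le (hb.mul_const _) (.of_forall fun t => ?_)
  rw [norm_smul]
  calc _ ≤ ‖φ t‖ * (|2 * Real.pi * t| * ‖A * J - J * B‖) := by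
        gcongr; exact qc_exp_bound A B J hA hB _
    _ = ‖φ t‖ * (2 * Real.pi * |t|) * ‖A * J - J * B‖ := by
        rw [abs_mul, abs_of_pos (by positivity : (0:ℝ) < 2 * Real.pi)]; ring
    _ ≤ _ := by gcongr; exact hbb t
lemma qc_iter_ofReal (h : ℝ → ℝ) (hh : ContDiff ℝ 3 h) (k : ℕ) (hk : k ≤ 3) :
    iteratedDeriv k (fun x => (h x : ℂ)) = fun x => ((iteratedDeriv k h x : ℝ) : ℂ) := by
  induction k with
  | zero => simp
  | succ k ih =>
    rw [iteratedDeriv_succ, iteratedDeriv_succ, ih (by omega)]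
    ext x
    have hd : DifferentiableAt ℝ (iteratedDeriv k h) x :=
      (hh.differentiable_iteratedDeriv k (by exact_mod_cast hk)) x
    exact hd.hasDerivAt.ofReal_comp.deriv

lemma qc_compact (h : ℝ → ℝ) (hh : ContDiff ℝ 3 h) (hs : HasCompactSupport h) (k : ℕ)
    (hk : k ≤ 3) : Continuous (iteratedDeriv k h) ∧ HasCompactSupport (iteratedDeriv k h) := by
  refine ⟨hh.continuous_iteratedDeriv k (by exact_mod_cast hk), ?_⟩
  clear hk
  induction k with
  | zero => simpa using hs
  | succ k ih => rw [iteratedDeriv_succ]; exact ih.deriv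

lemma qc_lorentz (R : ℝ) (hR : 0 < R) :
    Integrable (fun t : ℝ => (1 + (R * (2 * Real.pi * t)) ^ 2)⁻¹) ∧
    ∫ t : ℝ, (1 + (R * (2 * Real.pi * t)) ^ 2)⁻¹ = 1 / (2 * R) := by
  have hp := Real.pi_pos
  have e : (fun t : ℝ => (1 + (R * (2 * Real.pi * t)) ^ 2)⁻¹)
    = fun t => (fun y : ℝ => (1 + y ^ 2)⁻¹) ((R * (2 * Real.pi)) * t) := by
    ext t; simp only [mul_assoc]
  rw [e]
  constructor
  · exact integrable_inv_one_add_sq.comp_mul_left' (by positivity)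
  · rw [Measure.integral_comp_mul_left (fun y : ℝ => (1 + y ^ 2)⁻¹), integral_univ_inv_one_add_sq,
      abs_of_pos (by positivity), smul_eq_mul]
    field_simp

lemma qc_piece (A B J : H →L[ℂ] H) (hA : IsSelfAdjoint A) (hB : IsSelfAdjoint B)
    (h : ℝ → ℝ) (hh : ContDiff ℝ 3 h) (hs : HasCompactSupport h) (R : ℝ) (hR : 0 < R) :
    ‖cfc h A * J - J * cfc h B‖ ≤
      (R⁻¹ * (∫ x, |iteratedDeriv 1 h x|) + R * ∫ x, |iteratedDeriv 3 h x|) * ‖A * J - J * B‖ := by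
  set g : ℝ → ℂ := fun x => (h x : ℂ) with hg
  have hgc : ContDiff ℝ 3 g := Complex.ofRealCLM.contDiff.comp hh
  have hint : ∀ k : ℕ, k ≤ 3 → Integrable (iteratedDeriv k g) := by
    intro k hk
    rw [qc_iter_ofReal h hh k hk]
    obtain ⟨c, d⟩ := qc_compact h hh hs k hk
    exact (c.integrable_of_hasCompactSupport d).ofReal
  have hF : ∀ k : ℕ, k ≤ 3 → ∀ t : ℝ, (2 * Real.pi * |t|) ^ k * ‖𝓕 g t‖
      ≤ ∫ x, |iteratedDeriv k h x| := by
    intro k hk t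
    have h1 := Real.fourier_iteratedDeriv (f := g) (N := 3) (n := k) (by exact_mod_cast hgc)
      (fun m hm => hint m (by exact_mod_cast hm)) (by exact_mod_cast hk)
    have h2 : ‖𝓕 (iteratedDeriv k g) t‖ ≤ ∫ x, ‖iteratedDeriv k g x‖ :=
      VectorFourier.norm_fourierIntegral_le_integral_norm _ _ _ _ _
    rw [h1, qc_iter_ofReal h hh k hk] at h2
    simpa [norm_smul, abs_of_pos Real.pi_pos] using h2
  have hcont : Continuous (𝓕 g) := by
    have := hint 0 (by norm_num)
    rw [iteratedDeriv_zero] at this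
    exact VectorFourier.fourierIntegral_continuous Real.continuous_fourierChar
      (by exact continuous_inner) this
  have hFi : Integrable (𝓕 g) := by
    refine Integrable.mono' ((qc_lorentz 1 one_pos).1.const_mul
      ((∫ x, |iteratedDeriv 0 h x|) + ∫ x, |iteratedDeriv 2 h x|))
      hcont.aestronglyMeasurable (.of_forall fun t => ?_)
    have h0 := hF 0 (by norm_num) t
    have h2 := hF 2 (by norm_num) t
    rw [← div_eq_mul_inv, le_div_iff₀ (by positivity)]
    rw [mul_pow, sq_abs] at h2
    nlinarith
  have hrep : ∀ x : ℝ, (h x : ℂ) = ∫ t : ℝ, 𝓕 g t *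
      Complex.exp ((2 * Real.pi * t * x : ℝ) * Complex.I) := by
    intro x
    have hi := hint 0 (by norm_num)
    rw [iteratedDeriv_zero] at hi
    have := congrFun (hgc.continuous.fourierInv_fourier_eq hi hFi) x
    rw [Real.fourierInv_eq'] at this
    rw [show (h x : ℂ) = g x from rfl, ← this]
    congr 1
    ext t
    rw [smul_eq_mul, mul_comm]
    simp [mul_comm, mul_left_comm, mul_assoc]
  set a := ∫ x, |iteratedDeriv 1 h x|
  set c := ∫ x, |iteratedDeriv 3 h x|
  have ha : 0 ≤ a := integral_nonneg fun _ => abs_nonneg _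
  have hc : 0 ≤ c := integral_nonneg fun _ => abs_nonneg _
  obtain ⟨l1, l2⟩ := qc_lorentz R hR
  refine (qc_fourier A B J hA hB h (𝓕 g) hcont hFi hrep
    (fun t => (a + R ^ 2 * c) * (1 + (R * (2 * Real.pi * t)) ^ 2)⁻¹) (l1.const_mul _) ?_).trans ?_
  · intro t
    have h1 := hF 1 (by norm_num) t
    have h3 := hF 3 (by norm_num) t
    rw [← div_eq_mul_inv, le_div_iff₀ (by positivity)]
    have e : (R * (2 * Real.pi * t)) ^ 2 = R ^ 2 * (2 * Real.pi * |t|) ^ 2 := by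
      rw [mul_pow, mul_pow, mul_pow _ |t|, sq_abs]
    rw [e]
    have h3' := mul_le_mul_of_nonneg_left h3 (sq_nonneg R)
    rw [pow_one] at h1
    change _ ≤ a at h1
    change _ ≤ R ^ 2 * c at h3'
    nlinarith
  · gcongr
    rw [integral_const_mul, l2]
    have : (a + R ^ 2 * c) * (1 / (2 * R)) = (R⁻¹ * a + R * c) / 2 := by field_simp
    rw [this]
    have : 0 ≤ R⁻¹ * a + R * c := by positivity
    linarith
lemma qc_bump : ∃ (θ : ℝ → ℝ) (K : ℝ), ContDiff ℝ 3 θ ∧ 0 ≤ K ∧ (∀ x, |x| ≤ 1 → θ x = 1) ∧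
    (∀ x, 2 ≤ |x| → θ x = 0) ∧ ∀ k : ℕ, k ≤ 3 → ∀ x, |iteratedDeriv k θ x| ≤ K := by
  let β : ContDiffBump (0 : ℝ) := ⟨1, 2, one_pos, one_lt_two⟩
  have hc : ContDiff ℝ 3 β := β.contDiff
  have hb : ∀ k : ℕ, ∃ C : ℝ, k ≤ 3 → ∀ x, |iteratedDeriv k β x| ≤ C := by
    intro k
    by_cases hk : k ≤ 3
    · obtain ⟨c, d⟩ := qc_compact β hc β.hasCompactSupport k hk
      obtain ⟨C, hC⟩ := d.exists_bound_of_continuous c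
      exact ⟨C, fun _ x => hC x⟩
    · exact ⟨0, fun h => absurd h hk⟩
  choose C hC using hb
  refine ⟨β, ∑ k ∈ Finset.range 4, |C k|, hc, Finset.sum_nonneg fun _ _ => abs_nonneg _, ?_, ?_, ?_⟩
  · intro x hx
    exact β.one_of_mem_closedBall (by simpa [β] using hx)
  · intro x hx
    exact β.zero_of_le_dist (by simpa [β] using hx)
  · intro k hk x
    refine (hC k hk x).trans ((le_abs_self _).trans ?_)
    exact Finset.single_le_sum (f := fun k => |C k|) (fun _ _ => abs_nonneg _)
      (Finset.mem_range.2 (by omega))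

/-- dyadic pieces -/
noncomputable def qcChi (θ : ℝ → ℝ) : ℕ → ℝ → ℝ
  | 0 => θ
  | j + 1 => fun x => θ ((2 ^ (j + 1))⁻¹ * x) - θ ((2 ^ j)⁻¹ * x)

lemma qcChi_sum (θ : ℝ → ℝ) (M : ℕ) (x : ℝ) :
    ∑ j ∈ Finset.range (M + 1), qcChi θ j x = θ ((2 ^ M)⁻¹ * x) := by
  induction M with
  | zero => simp [qcChi]
  | succ M ih => rw [Finset.sum_range_succ, ih]; simp [qcChi]

lemma qcChi_contDiff (θ : ℝ → ℝ) (hθ : ContDiff ℝ 3 θ) (j : ℕ) : ContDiff ℝ 3 (qcChi θ j) := by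
  cases j with
  | zero => exact hθ
  | succ j =>
    exact (hθ.comp (contDiff_const.mul contDiff_id)).sub (hθ.comp (contDiff_const.mul contDiff_id))

lemma qcChi_bound (θ : ℝ → ℝ) (K : ℝ) (hθ : ContDiff ℝ 3 θ) (hK : 0 ≤ K)
    (hb : ∀ k : ℕ, k ≤ 3 → ∀ x, |iteratedDeriv k θ x| ≤ K) (j k : ℕ) (hk : k ≤ 3) (x : ℝ) :
    |iteratedDeriv k (qcChi θ j) x| ≤ 9 * K * ((2 ^ j)⁻¹) ^ k := by
  cases j with
  | zero => simp only [qcChi, pow_zero, inv_one, one_pow, mul_one]; linarith [hb k hk x]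
  | succ j =>
    have hθk : ContDiff ℝ k θ := hθ.of_le (by exact_mod_cast hk)
    have e : iteratedDeriv k (qcChi θ (j + 1)) x
        = ((2 ^ (j + 1))⁻¹) ^ k * iteratedDeriv k θ ((2 ^ (j + 1))⁻¹ * x)
          - ((2 ^ j)⁻¹) ^ k * iteratedDeriv k θ ((2 ^ j)⁻¹ * x) := by
      have h1 := congrFun (iteratedDeriv_comp_const_mul hθk ((2 ^ (j + 1))⁻¹)) x
      have h2 := congrFun (iteratedDeriv_comp_const_mul hθk ((2 ^ j)⁻¹)) x
      rw [← h1, ← h2]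
      exact iteratedDeriv_fun_sub
        (f := fun x => θ ((2 ^ (j + 1))⁻¹ * x)) (g := fun x => θ ((2 ^ j)⁻¹ * x))
        (hθk.comp (contDiff_const.mul contDiff_id)).contDiffAt
        (hθk.comp (contDiff_const.mul contDiff_id)).contDiffAt
    rw [e]
    have e2 : ((2 ^ j : ℝ)⁻¹) ^ k = 2 ^ k * ((2 ^ (j + 1) : ℝ)⁻¹) ^ k := by
      rw [← mul_pow]; congr 1; rw [pow_succ]; field_simp
    have h8 : (2 : ℝ) ^ k ≤ 8 := by
      calc (2 : ℝ) ^ k ≤ 2 ^ 3 := pow_le_pow_right₀ (by norm_num) hk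
        _ = 8 := by norm_num
    set p := ((2 ^ (j + 1) : ℝ)⁻¹) ^ k with hp
    have hp0 : 0 ≤ p := by positivity
    rw [e2]
    refine (abs_sub _ _).trans ?_
    rw [abs_mul, abs_mul, abs_of_nonneg hp0, abs_of_nonneg (by positivity : 0 ≤ 2 ^ k * p)]
    calc _ ≤ p * K + 8 * p * K := by
          gcongr
          · exact hb k hk _
          · exact hb k hk _
      _ = _ := by ring

lemma qcChi_zero (θ : ℝ → ℝ) (h1 : ∀ x, |x| ≤ 1 → θ x = 1) (h2 : ∀ x, 2 ≤ |x| → θ x = 0)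
    (j k : ℕ) (x : ℝ)
    (hx : 1 + x ^ 2 < (2 ^ j) ^ 2 / 4 ∨ 9 * (2 ^ j) ^ 2 < 1 + x ^ 2) :
    iteratedDeriv k (qcChi θ j) x = 0 := by
  have hR : (1 : ℝ) ≤ 2 ^ j := one_le_pow₀ (by norm_num)
  have hz : qcChi θ j =ᶠ[nhds x] fun _ => 0 := by
    have ho : ∀ᶠ y in nhds x, 1 + y ^ 2 < (2 ^ j) ^ 2 / 4 ∨ 9 * (2 ^ j) ^ 2 < 1 + y ^ 2 := by
      have o1 : IsOpen {y : ℝ | 1 + y ^ 2 < (2 ^ j) ^ 2 / 4} := isOpen_lt (by fun_prop) (by fun_prop)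
      have o2 : IsOpen {y : ℝ | 9 * (2 ^ j) ^ 2 < 1 + y ^ 2} := isOpen_lt (by fun_prop) (by fun_prop)
      exact (o1.union o2).mem_nhds hx
    filter_upwards [ho] with y hy
    rcases hy with hy | hy
    · cases j with
      | zero => norm_num at hy; nlinarith
      | succ j =>
        have hj : (0:ℝ) < 2 ^ j := by positivity
        have hy' : |y| ≤ 2 ^ j := by
          apply abs_le_of_sq_le_sq _ hj.le
          rw [pow_succ 2 j, mul_pow] at hy; linarith
        simp only [qcChi]
        rw [h1, h1, sub_self]
        · rw [abs_mul, abs_of_pos (by positivity), inv_mul_le_iff₀ hj]; linarith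
        · rw [abs_mul, abs_of_pos (by positivity), inv_mul_le_iff₀ (by positivity), pow_succ]
          linarith
    · have hy' : 2 * 2 ^ j ≤ |y| := by
        apply le_abs.2
        by_contra hcon
        push Not at hcon
        nlinarith
      cases j with
      | zero => simp only [qcChi]; exact h2 _ (by simpa using hy')
      | succ j =>
        have hj : (0:ℝ) < 2 ^ j := by positivity
        simp only [qcChi]
        rw [h2, h2, sub_self]
        · rw [abs_mul, abs_of_pos (by positivity), le_inv_mul_iff₀ hj]
          rw [pow_succ] at hy'; linarith
        · rw [abs_mul, abs_of_pos (by positivity), le_inv_mul_iff₀ (by positivity)]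
          linarith
  rw [hz.iteratedDeriv_eq]
  simp

noncomputable def qcV (j : ℕ) (x : ℝ) : ℝ := (1 + 4 * (1 + x ^ 2) / (2 ^ j) ^ 2)⁻¹

lemma qcV_bounds (j : ℕ) (x : ℝ) : 0 ≤ qcV j x ∧ qcV j x ≤ 1 := by
  unfold qcV
  have : 0 ≤ 4 * (1 + x ^ 2) / (2 ^ j) ^ 2 := by positivity
  exact ⟨by positivity, inv_le_one_of_one_le₀ (by linarith)⟩

lemma qcV_diff (j : ℕ) (x : ℝ) : 0 ≤ qcV (j + 1) x - qcV j x ∧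
    ((2 ^ j) ^ 2 / 4 ≤ 1 + x ^ 2 → 1 + x ^ 2 ≤ 9 * (2 ^ j) ^ 2 →
      1 ≤ 20 * (qcV (j + 1) x - qcV j x)) := by
  have hR : (0 : ℝ) < (2 ^ j) ^ 2 := by positivity
  have e : 4 * (1 + x ^ 2) / (2 ^ (j + 1)) ^ 2 = (1 + x ^ 2) / (2 ^ j) ^ 2 := by
    rw [pow_succ]; field_simp; ring
  have e2 : 4 * (1 + x ^ 2) / (2 ^ j) ^ 2 = 4 * ((1 + x ^ 2) / (2 ^ j) ^ 2) := by ring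
  unfold qcV
  rw [e, e2]
  set q := (1 + x ^ 2) / (2 ^ j) ^ 2 with hq
  have hq0 : 0 < q := by positivity
  have e3 : (1 + q)⁻¹ - (1 + 4 * q)⁻¹ = 3 * q / ((1 + q) * (1 + 4 * q)) := by
    field_simp; ring
  rw [e3]
  refine ⟨by positivity, fun ha hb => ?_⟩
  have ha' : 1 / 4 ≤ q := by rw [hq, le_div_iff₀ hR]; linarith
  have hb' : q ≤ 9 := by rw [hq, div_le_iff₀ hR]; linarith
  rw [← mul_div_assoc, le_div_iff₀ (by positivity)]
  nlinarith

noncomputable def qcG (f : ℝ → ℝ) (x : ℝ) : ℝ :=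
  ∑ l ∈ Finset.range 4, |iteratedDeriv l f x| * Real.sqrt (1 + x ^ 2) ^ ((l : ℤ) - 2)

lemma qcG_nonneg (f : ℝ → ℝ) (x : ℝ) : 0 ≤ qcG f x :=
  Finset.sum_nonneg fun _ _ => by positivity

lemma qc_alg (a0 a1 a2 a3 b0 b1 b2 b3 R s K : ℝ) (hR : 0 < R) (hs : 0 < s) (hK : 0 ≤ K)
    (ha0 : 0 ≤ a0) (ha1 : 0 ≤ a1) (ha2 : 0 ≤ a2) (ha3 : 0 ≤ a3)
    (h0 : b0 ≤ K) (h1 : b1 ≤ K * R⁻¹) (h2 : b2 ≤ K * R⁻¹ ^ 2) (h3 : b3 ≤ K * R⁻¹ ^ 3)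
    (hRs : R ≤ 2 * s) (hsR : s ≤ 3 * R) :
    R⁻¹ * (a0 * b1 + a1 * b0) + R * (a0 * b3 + 3 * a1 * b2 + 3 * a2 * b1 + a3 * b0)
      ≤ 18 * K * (a0 * s⁻¹ ^ 2 + a1 * s⁻¹ + a2 + a3 * s) := by
  have hi : R⁻¹ ≤ 3 * s⁻¹ := by
    rw [← div_eq_mul_inv, le_div_iff₀ hs, inv_mul_le_iff₀ hR]; linarith
  have hi2 : R⁻¹ ^ 2 ≤ 9 * s⁻¹ ^ 2 := by
    calc R⁻¹ ^ 2 ≤ (3 * s⁻¹) ^ 2 := by gcongr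
      _ = _ := by ring
  have hRi : R * R⁻¹ = 1 := mul_inv_cancel₀ hR.ne'
  calc _ ≤ R⁻¹ * (a0 * (K * R⁻¹) + a1 * K) + R * (a0 * (K * R⁻¹ ^ 3) + 3 * a1 * (K * R⁻¹ ^ 2)
        + 3 * a2 * (K * R⁻¹) + a3 * K) := by gcongr
    _ = K * (2 * a0 * R⁻¹ ^ 2 + 4 * a1 * R⁻¹ + 3 * a2 + a3 * R) := by field_simp; ring
    _ ≤ K * (2 * a0 * (9 * s⁻¹ ^ 2) + 4 * a1 * (3 * s⁻¹) + 3 * a2 + a3 * (2 * s)) := by gcongr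
    _ ≤ _ := by
      have hp : 0 ≤ a1 * s⁻¹ := by positivity
      have hp2 : 0 ≤ a3 * s := by positivity
      rw [mul_comm 18 K, mul_assoc K 18]
      refine mul_le_mul_of_nonneg_left ?_ hK
      linarith

lemma qc_pointwise (θ : ℝ → ℝ) (K : ℝ) (hθ : ContDiff ℝ 3 θ) (hK : 0 ≤ K)
    (h1 : ∀ x, |x| ≤ 1 → θ x = 1) (h2 : ∀ x, 2 ≤ |x| → θ x = 0)
    (hb : ∀ k : ℕ, k ≤ 3 → ∀ x, |iteratedDeriv k θ x| ≤ K)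
    (f : ℝ → ℝ) (hf : ContDiff ℝ 3 f) (j : ℕ) (x : ℝ) :
    (2 ^ j)⁻¹ * |iteratedDeriv 1 (fun x => f x * qcChi θ j x) x|
      + 2 ^ j * |iteratedDeriv 3 (fun x => f x * qcChi θ j x) x|
      ≤ 18 * (9 * K) * qcG f x * (20 * (qcV (j + 1) x - qcV j x)) := by
  have hχ := qcChi_contDiff θ hθ j
  have hB := fun k hk => qcChi_bound θ K hθ hK hb j k hk x
  have hR : (0 : ℝ) < 2 ^ j := by positivity
  obtain ⟨hv0, hv1⟩ := qcV_diff j x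
  have e1 : iteratedDeriv 1 (fun x => f x * qcChi θ j x) x
      = f x * iteratedDeriv 1 (qcChi θ j) x + iteratedDeriv 1 f x * qcChi θ j x := by
    rw [iteratedDeriv_fun_mul (n := 1) (hf.of_le (by norm_num)).contDiffAt
      (hχ.of_le (by norm_num)).contDiffAt]
    simp [Finset.sum_range_succ]
  have e3 : iteratedDeriv 3 (fun x => f x * qcChi θ j x) x
      = f x * iteratedDeriv 3 (qcChi θ j) x + 3 * iteratedDeriv 1 f x * iteratedDeriv 2 (qcChi θ j) x
      + 3 * iteratedDeriv 2 f x * iteratedDeriv 1 (qcChi θ j) x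
      + iteratedDeriv 3 f x * qcChi θ j x := by
    rw [iteratedDeriv_fun_mul (n := 3) hf.contDiffAt hχ.contDiffAt]
    simp [Finset.sum_range_succ, Nat.choose]
  by_cases hx : 1 + x ^ 2 < (2 ^ j) ^ 2 / 4 ∨ 9 * (2 ^ j) ^ 2 < 1 + x ^ 2
  · have z := fun k => qcChi_zero θ h1 h2 j k x hx
    have z0 := z 0
    rw [iteratedDeriv_zero] at z0
    rw [e1, e3, z 1, z 2, z 3, z0]
    simp only [mul_zero, add_zero, abs_zero]
    have := qcG_nonneg f x
    positivity
  · push Not at hx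
    have hv := hv1 hx.1 hx.2
    set s := Real.sqrt (1 + x ^ 2) with hs
    have hs0 : 0 < s := Real.sqrt_pos.2 (by positivity)
    have hs2 : s ^ 2 = 1 + x ^ 2 := Real.sq_sqrt (by positivity)
    have hRs : 2 ^ j ≤ 2 * s := by
      refine le_of_sq_le_sq ?_ (by positivity)
      rw [mul_pow, hs2]; linarith [hx.1]
    have hsR : s ≤ 3 * 2 ^ j := by
      refine le_of_sq_le_sq ?_ (by positivity)
      rw [mul_pow, hs2]; linarith [hx.2]
    have hG : qcG f x = |f x| * s⁻¹ ^ 2 + |iteratedDeriv 1 f x| * s⁻¹ + |iteratedDeriv 2 f x|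
        + |iteratedDeriv 3 f x| * s := by
      simp only [qcG, Finset.sum_range_succ, Finset.sum_range_zero, ← hs]
      norm_num [zpow_neg]
    have hB0 := hB 0 (by norm_num)
    have hB1 := hB 1 (by norm_num)
    have hB2 := hB 2 (by norm_num)
    have hB3 := hB 3 (by norm_num)
    rw [iteratedDeriv_zero, pow_zero, mul_one] at hB0
    rw [pow_one] at hB1
    have alg := qc_alg |f x| |iteratedDeriv 1 f x| |iteratedDeriv 2 f x| |iteratedDeriv 3 f x|
      _ _ _ _ (2 ^ j) s (9 * K) hR hs0 (by positivity) (abs_nonneg _) (abs_nonneg _)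
      (abs_nonneg _) (abs_nonneg _) hB0 hB1 hB2 hB3 hRs hsR
    rw [← hG] at alg
    calc _ ≤ 18 * (9 * K) * qcG f x := by
          refine le_trans ?_ alg
          rw [e1, e3]
          gcongr
          · refine (abs_add_le _ _).trans ?_
            rw [abs_mul, abs_mul]
          · refine (abs_add_le _ _).trans (add_le_add ((abs_add_le _ _).trans
              (add_le_add ((abs_add_le _ _).trans (add_le_add ?_ ?_)) ?_)) ?_) <;>
            simp [abs_mul]
      _ ≤ _ := by
          have : 0 ≤ 18 * (9 * K) * qcG f x := by
            have := qcG_nonneg f x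
            positivity
          exact le_mul_of_one_le_right this hv

lemma qcG_integrable (f : ℝ → ℝ) (hf : ContDiff ℝ 3 f) (hs : HasCompactSupport f) :
    Continuous (qcG f) ∧ HasCompactSupport (qcG f) := by
  have hsq : ∀ x : ℝ, Real.sqrt (1 + x ^ 2) ≠ 0 := fun x =>
    (Real.sqrt_pos.2 (by positivity)).ne'
  constructor
  · unfold qcG
    refine continuous_finsetSum _ fun l hl => ?_
    have := (qc_compact f hf hs l (by have := Finset.mem_range.1 hl; omega)).1
    refine this.abs.mul (Continuous.zpow₀ (by fun_prop) _ fun x => .inl (hsq x))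
  · refine HasCompactSupport.intro' (K := tsupport f) hs (isClosed_tsupport f) fun x hx => ?_
    unfold qcG
    refine Finset.sum_eq_zero fun l _ => ?_
    have : iteratedDeriv l f x = 0 := by
      have hz : f =ᶠ[nhds x] fun _ => 0 := notMem_tsupport_iff_eventuallyEq.1 hx
      rw [hz.iteratedDeriv_eq]; simp
    simp [this]

lemma qc_main : ∃ C : ℝ, 0 ≤ C ∧ ∀ (H : Type*) [NormedAddCommGroup H] [InnerProductSpace ℂ H]
    [CompleteSpace H] (A B J : H →L[ℂ] H) (f : ℝ → ℝ), IsSelfAdjoint A → IsSelfAdjoint B →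
    ContDiff ℝ 3 f → HasCompactSupport f →
    ‖cfc f A * J - J * cfc f B‖ ≤ C * (∫ x, qcG f x) * ‖A * J - J * B‖ := by
  obtain ⟨θ, K, hθ, hK, h1, h2, hb⟩ := qc_bump
  refine ⟨18 * (9 * K) * 20, by positivity, ?_⟩
  intro H _ _ _ A B J f hA hB hf hs
  obtain ⟨Gc, Gs⟩ := qcG_integrable f hf hs
  have hM : ∃ M : ℕ, ∀ x, f x ≠ 0 → |x| ≤ 2 ^ M := by
    obtain ⟨r, hr⟩ := hs.isCompact.isBounded.subset_closedBall 0
    obtain ⟨M, hM⟩ := pow_unbounded_of_one_lt r (one_lt_two (α := ℝ))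
    refine ⟨M, fun x hx => ?_⟩
    have := hr (subset_tsupport f hx)
    simp only [Metric.mem_closedBall, dist_zero_right, Real.norm_eq_abs] at this
    linarith
  obtain ⟨M, hM⟩ := hM
  set g : ℕ → ℝ → ℝ := fun j x => f x * qcChi θ j x with hg
  have hgc : ∀ j, ContDiff ℝ 3 (g j) := fun j => hf.mul (qcChi_contDiff θ hθ j)
  have hgs : ∀ j, HasCompactSupport (g j) := fun j => hs.mul_right
  have hsum : f = fun x => ∑ j ∈ Finset.range (M + 1), g j x := by
    ext x
    simp only [hg]
    rw [← Finset.mul_sum, qcChi_sum]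
    by_cases hx : f x = 0
    · simp [hx]
    · rw [h1, mul_one]
      rw [abs_mul, abs_of_pos (by positivity), inv_mul_le_iff₀ (by positivity)]
      linarith [hM x hx]
  have hcf : ∀ A : H →L[ℂ] H, cfc f A = ∑ j ∈ Finset.range (M + 1), cfc (g j) A := by
    intro A
    have hsum' : f = ∑ j ∈ Finset.range (M + 1), g j := by
      rw [hsum]; ext x; simp
    conv_lhs => rw [hsum']
    exact cfc_sum g A (Finset.range (M + 1)) (fun j _ => (hgc j).continuous.continuousOn)
  have hVc : ∀ j, Continuous (qcV j) := by
    intro j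
    unfold qcV
    refine Continuous.inv₀ (by fun_prop) fun x => ?_
    positivity
  set W : ℕ → ℝ → ℝ := fun j x => 18 * (9 * K) * qcG f x * (20 * (qcV (j + 1) x - qcV j x)) with hW
  have hWi : ∀ j, Integrable (W j) := by
    intro j
    apply Continuous.integrable_of_hasCompactSupport
    · have := hVc j
      have := hVc (j + 1)
      fun_prop
    · exact (Gs.mul_left (f := fun _ => 18 * (9 * K))).mul_right
  have hp : ∀ j, ‖cfc (g j) A * J - J * cfc (g j) B‖ ≤ (∫ x, W j x) * ‖A * J - J * B‖ := by
    intro j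
    refine (qc_piece A B J hA hB (g j) (hgc j) (hgs j) (2 ^ j) (by positivity)).trans ?_
    gcongr
    obtain ⟨c1, d1⟩ := qc_compact (g j) (hgc j) (hgs j) 1 (by norm_num)
    obtain ⟨c3, d3⟩ := qc_compact (g j) (hgc j) (hgs j) 3 (by norm_num)
    have i1 := (c1.integrable_of_hasCompactSupport d1 (μ := volume)).abs.const_mul ((2 ^ j : ℝ)⁻¹)
    have i3 := (c3.integrable_of_hasCompactSupport d3 (μ := volume)).abs.const_mul (2 ^ j : ℝ)
    rw [← integral_const_mul, ← integral_const_mul, ← integral_add i1 i3]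
    exact integral_mono (i1.add i3) (hWi j) fun x =>
      qc_pointwise θ K hθ hK h1 h2 hb f hf j x
  have e : cfc f A * J - J * cfc f B
      = ∑ j ∈ Finset.range (M + 1), (cfc (g j) A * J - J * cfc (g j) B) := by
    rw [hcf A, hcf B, Finset.sum_sub_distrib, Finset.sum_mul, Finset.mul_sum]
  rw [e]
  refine (norm_sum_le _ _).trans ((Finset.sum_le_sum fun j _ => hp j).trans ?_)
  rw [← Finset.sum_mul]
  gcongr
  rw [← integral_finsetSum _ fun j _ => hWi j, ← integral_const_mul]
  refine integral_mono (integrable_finsetSum _ fun j _ => hWi j)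
    ((Gc.integrable_of_hasCompactSupport Gs).const_mul _) fun x => ?_
  simp only [hW]
  rw [← Finset.mul_sum, ← Finset.mul_sum, Finset.sum_range_sub (fun j => qcV j x)]
  have := qcG_nonneg f x
  have b1 := (qcV_bounds (M + 1) x).2
  have b2 := (qcV_bounds 0 x).1
  calc _ ≤ 18 * (9 * K) * qcG f x * (20 * 1) := by gcongr; linarith
    _ = _ := by ring

lemma qcG_le (n : ℕ) (hn : 3 ≤ n) (f : ℝ → ℝ) (hf : ContDiff ℝ n f) (hs : HasCompactSupport f) :
    ∫ x, qcG f x ≤ Nseminorm n f := by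
  have hf3 : ContDiff ℝ 3 f := hf.of_le (by exact_mod_cast hn)
  obtain ⟨Gc, Gs⟩ := qcG_integrable f hf3 hs
  have hsq : ∀ x : ℝ, 0 < Real.sqrt (1 + x ^ 2) := fun x => Real.sqrt_pos.2 (by positivity)
  unfold Nseminorm
  refine integral_mono (Gc.integrable_of_hasCompactSupport Gs) ?_ fun x => ?_
  · apply Continuous.integrable_of_hasCompactSupport
    · refine Continuous.mul (continuous_finsetSum _ fun l hl => ?_)
        (Continuous.zpow₀ (by fun_prop) _ fun x => .inl (hsq x).ne')
      have : Continuous (iteratedDeriv l f) := hf.continuous_iteratedDeriv l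
        (by have := Finset.mem_range.1 hl; exact_mod_cast Nat.lt_succ_iff.1 this)
      exact this.abs.mul (Continuous.zpow₀ (by fun_prop) _ fun x => .inl (hsq x).ne')
    · refine HasCompactSupport.intro' (K := tsupport f) hs (isClosed_tsupport f) fun x hx => ?_
      rw [Finset.sum_eq_zero, zero_mul]
      intro l _
      have : iteratedDeriv l f x = 0 := by
        have hz : f =ᶠ[nhds x] fun _ => 0 := notMem_tsupport_iff_eventuallyEq.1 hx
        rw [hz.iteratedDeriv_eq]; simp
      simp [this]
  · simp only [qcG]
    rw [Finset.sum_mul]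
    refine le_trans ?_ (Finset.sum_le_sum_of_subset_of_nonneg
      (Finset.range_mono (by omega : 4 ≤ n + 1)) fun l _ _ => by positivity)
    refine le_of_eq (Finset.sum_congr rfl fun l _ => ?_)
    rw [mul_assoc, ← zpow_add₀ (hsq x).ne']
    congr 2
    ring

lemma qc_Dop (A₁ A₂ P₁ P₂ J : H →L[ℂ] H) (f : ℝ → ℝ) (hA₁ : IsSelfAdjoint A₁)
    (hA₂ : IsSelfAdjoint A₂) (hP₁ : IsSelfAdjoint P₁) (hP₂ : IsSelfAdjoint P₂)
    (n₁ : ‖P₁‖ ≤ 1) (n₂ : ‖P₂‖ ≤ 1) (c₁ : P₁ * J = J * P₁) (c₂ : P₂ * J = J * P₂)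
    (c₃ : P₁ * J = P₂ * J) (L : ℝ) (hL : 0 ≤ L)
    (h : ∀ A B : H →L[ℂ] H, IsSelfAdjoint A → IsSelfAdjoint B →
      ‖cfc f A * J - J * cfc f B‖ ≤ L * ‖A * J - J * B‖) :
    ‖Dop A₁ P₁ f * J - J * Dop A₂ P₂ f‖ ≤ 2 * L * ‖A₁ * J - J * A₂‖ := by
  have c₄ : P₁ * J = J * P₂ := c₃.trans c₂
  have sand : ∀ X Y : H →L[ℂ] H,
      P₁ * X * P₁ * J - J * (P₂ * Y * P₂) = P₁ * (X * J - J * Y) * P₂ := by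
    intro X Y
    calc _ = P₁ * X * (P₁ * J) - (J * P₂) * Y * P₂ := by noncomm_ring
      _ = P₁ * X * (J * P₂) - (P₁ * J) * Y * P₂ := by rw [← c₄]
      _ = _ := by noncomm_ring
  have sn : ∀ X : H →L[ℂ] H, ‖P₁ * X * P₂‖ ≤ ‖X‖ := by
    intro X
    calc _ ≤ ‖P₁‖ * ‖X‖ * ‖P₂‖ :=
          (norm_mul_le _ _).trans (mul_le_mul_of_nonneg_right (norm_mul_le _ _) (norm_nonneg _))
      _ ≤ 1 * ‖X‖ * 1 := by gcongr
      _ = _ := by ring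
  have sa : ∀ A P : H →L[ℂ] H, IsSelfAdjoint A → IsSelfAdjoint P → IsSelfAdjoint (P * A * P) := by
    intro A P hA hP
    have := hA.conjugate P
    rwa [hP.star_eq] at this
  have e : Dop A₁ P₁ f * J - J * Dop A₂ P₂ f
      = P₁ * (cfc f (P₁ * A₁ * P₁) * J - J * cfc f (P₂ * A₂ * P₂)) * P₂
        - P₁ * (cfc f A₁ * J - J * cfc f A₂) * P₂ := by
    rw [← sand, ← sand]
    unfold Dop
    noncomm_ring
  rw [e]
  have b1 := h _ _ (sa A₁ P₁ hA₁ hP₁) (sa A₂ P₂ hA₂ hP₂)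
  have b2 := h A₁ A₂ hA₁ hA₂
  rw [sand A₁ A₂] at b1
  have b3 : L * ‖P₁ * (A₁ * J - J * A₂) * P₂‖ ≤ L * ‖A₁ * J - J * A₂‖ :=
    mul_le_mul_of_nonneg_left (sn _) hL
  have b4 := sn (cfc f (P₁ * A₁ * P₁) * J - J * cfc f (P₂ * A₂ * P₂))
  have b5 := sn (cfc f A₁ * J - J * cfc f A₂)
  refine (norm_sub_le _ _).trans ?_
  linarith
end

/-- For `n ≥ 3` there is `C = C(n)` such that: for bounded self-adjoint `A₁, A₂`,
bounded self-adjoint `P₁, P₂` with `‖Pᵢ‖ ≤ 1`, and a bounded `J` with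
`[P₁,J] = [P₂,J] = 0` and `(P₁−P₂)J = 0`, and every compactly supported `f ∈ Cⁿ(ℝ)`:
`‖𝒟(A₁,P₁;f)J − J𝒟(A₂,P₂;f)‖ ≤ C N_n(f)(‖(A₁−A₂)J‖ + ‖[A₂,J]‖)` and
`‖J𝒟(A₁,P₁;f) − J𝒟(A₂,P₂;f)‖ ≤ C N_n(f)(‖(A₁−A₂)J‖ + ‖[A₁,J]‖ + ‖[A₂,J]‖)`. -/
theorem Dop_quasi_commutator_bound (n : ℕ) (hn : 3 ≤ n) :
    ∃ C : ℝ, ∀ (H : Type*) [NormedAddCommGroup H] [InnerProductSpace ℂ H] [CompleteSpace H]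
      (A₁ A₂ P₁ P₂ J : H →L[ℂ] H) (f : ℝ → ℝ),
      IsSelfAdjoint A₁ → IsSelfAdjoint A₂ →
      IsSelfAdjoint P₁ → IsSelfAdjoint P₂ → ‖P₁‖ ≤ 1 → ‖P₂‖ ≤ 1 →
      P₁ * J - J * P₁ = 0 → P₂ * J - J * P₂ = 0 → (P₁ - P₂) * J = 0 →
      ContDiff ℝ n f → HasCompactSupport f →
      ‖Dop A₁ P₁ f * J - J * Dop A₂ P₂ f‖
          ≤ C * Nseminorm n f * (‖(A₁ - A₂) * J‖ + ‖A₂ * J - J * A₂‖) ∧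
      ‖J * Dop A₁ P₁ f - J * Dop A₂ P₂ f‖
          ≤ C * Nseminorm n f *
            (‖(A₁ - A₂) * J‖ + ‖A₁ * J - J * A₁‖ + ‖A₂ * J - J * A₂‖) := by
  obtain ⟨C, hC, hmain⟩ := qc_main
  refine ⟨2 * C, ?_⟩
  intro H _ _ _ A₁ A₂ P₁ P₂ J f hA₁ hA₂ hP₁ hP₂ n₁ n₂ c₁ c₂ c₃ hf hs
  rw [sub_eq_zero] at c₁ c₂
  rw [sub_mul, sub_eq_zero] at c₃
  have hf3 : ContDiff ℝ 3 f := hf.of_le (by exact_mod_cast hn)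
  have hG := qcG_le n hn f hf hs
  have hN : 0 ≤ Nseminorm n f :=
    (MeasureTheory.integral_nonneg fun x => qcG_nonneg f x).trans hG
  have hL : 0 ≤ C * Nseminorm n f := mul_nonneg hC hN
  have h : ∀ A B : H →L[ℂ] H, IsSelfAdjoint A → IsSelfAdjoint B →
      ‖cfc f A * J - J * cfc f B‖ ≤ C * Nseminorm n f * ‖A * J - J * B‖ := by
    intro A B hA hB
    refine (hmain H A B J f hA hB hf3 hs).trans ?_
    gcongr
  have k1 := qc_Dop A₁ A₂ P₁ P₂ J f hA₁ hA₂ hP₁ hP₂ n₁ n₂ c₁ c₂ c₃ _ hL h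
  have k2 := qc_Dop A₁ A₁ P₁ P₁ J f hA₁ hA₁ hP₁ hP₁ n₁ n₁ c₁ c₁ rfl _ hL h
  have t : ‖A₁ * J - J * A₂‖ ≤ ‖(A₁ - A₂) * J‖ + ‖A₂ * J - J * A₂‖ := by
    have : A₁ * J - J * A₂ = (A₁ - A₂) * J + (A₂ * J - J * A₂) := by noncomm_ring
    rw [this]
    exact norm_add_le _ _
  have k3 : ‖Dop A₁ P₁ f * J - J * Dop A₂ P₂ f‖
      ≤ 2 * C * Nseminorm n f * (‖(A₁ - A₂) * J‖ + ‖A₂ * J - J * A₂‖) := by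
    refine k1.trans ?_
    rw [mul_assoc 2 C]
    gcongr
  refine ⟨k3, ?_⟩
  have e : J * Dop A₁ P₁ f - J * Dop A₂ P₂ f
      = (Dop A₁ P₁ f * J - J * Dop A₂ P₂ f) - (Dop A₁ P₁ f * J - J * Dop A₁ P₁ f) := by abel
  rw [e]
  refine (norm_sub_le _ _).trans ((add_le_add k3 k2).trans (le_of_eq ?_))
  ring
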